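/- Let N ≥ 2, j = j_{N/2−1}, and define u : closed unit ball of ℝ^N → ℝ by u(x) = j |x|^{1−N/2} J_{N/2−1}(j|x|) / (N ω_N ∫_0^j r J²_{N/2−1}(r) dr)^{1/2} (extended by continuity at the origin). Then u extends to a C^∞ function on the closed unit ball B, u > 0 in B, u = 0 on ∂B, −Δu = j² u in B, ∫_B u² dx = 1, and the modulus of the gradient of u is constant on ∂B, equal to G_N = j² J'_{N/2−1}(j) / (N ω_N ∫_0^j r J²_{N/2−1}(r) dr)^{1/2} in absolute value. -/

import Mathlib

open MeasureTheory Metric Set Filter Topology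
open scoped RealInnerProductSpace

noncomputable section

abbrev euc (N : ℕ) := EuclideanSpace ℝ (Fin N)

/-- Bessel function of the first kind of order `ν`, via its power series. -/
def besselJ (ν : ℝ) (x : ℝ) : ℝ :=
  ∑' m : ℕ, ((-1 : ℝ) ^ m / (m.factorial * Real.Gamma (m + ν + 1))) *
    (x / 2) ^ (2 * (m : ℝ) + ν)

/-- First positive zero of the Bessel function `J_ν`. -/
def besselJzero (ν : ℝ) : ℝ := sInf {x : ℝ | 0 < x ∧ besselJ ν x = 0}

/-- Volume of the unit ball of `ℝ^N`. -/
def ballVol (N : ℕ) : ℝ := (volume (ball (0 : euc N) 1)).toReal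

/-- Perimeter: `(N-1)`-dimensional Hausdorff measure of the topological boundary. -/
def perim (N : ℕ) (Ω : Set (euc N)) : ℝ := (μH[(N : ℝ) - 1] (frontier Ω)).toReal

/-- First Dirichlet Laplacian eigenvalue: infimum of Rayleigh quotients over nonzero
smooth functions compactly supported in `Ω`. -/
def firstEigenvalue (N : ℕ) (Ω : Set (euc N)) : ℝ :=
  sInf { R : ℝ | ∃ u : euc N → ℝ, ContDiff ℝ (⊤ : ℕ∞) u ∧ HasCompactSupport u ∧
    tsupport u ⊆ Ω ∧ u ≠ 0 ∧
    R = (∫ x, ‖gradient u x‖ ^ 2) / (∫ x, u x ^ 2) }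

/-- Radius of the ball `Ω♯` with the same Lebesgue measure as `Ω`. -/
def sharpRadius (N : ℕ) (Ω : Set (euc N)) : ℝ :=
  ((volume Ω).toReal / ballVol N) ^ ((1 : ℝ) / N)

/-- Isoperimetric deficit `δP(Ω) = Per(Ω)/Per(Ω♯) - 1`. -/
def perDeficit (N : ℕ) (Ω : Set (euc N)) : ℝ :=
  perim N Ω / perim N (ball (0 : euc N) (sharpRadius N Ω)) - 1

/-- Faber-Krahn deficit `δλ(Ω) = λ(Ω)/λ(Ω♯) - 1`. -/
def fkDeficit (N : ℕ) (Ω : Set (euc N)) : ℝ :=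
  firstEigenvalue N Ω / firstEigenvalue N (ball (0 : euc N) (sharpRadius N Ω)) - 1

/-- A one-parameter family `Ω t` of subsets of `ℝ^N` smoothly converges to `Ω₀` as `t → 0`. -/
structure SmoothlyConverges (N : ℕ) (Ω : ℝ → Set (euc N)) (Ω₀ : Set (euc N)) where
  δ : ℝ
  δ_pos : 0 < δ
  Φ : ℝ → euc N → euc N
  Φinv : ℝ → euc N → euc N
  left_inv : ∀ t ∈ Ico (0 : ℝ) δ, Function.LeftInverse (Φinv t) (Φ t)
  right_inv : ∀ t ∈ Ico (0 : ℝ) δ, Function.RightInverse (Φinv t) (Φ t)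
  smooth_x : ∀ t ∈ Ico (0 : ℝ) δ, ContDiff ℝ (⊤ : ℕ∞) (Φ t)
  smooth_x_inv : ∀ t ∈ Ico (0 : ℝ) δ, ContDiff ℝ (⊤ : ℕ∞) (Φinv t)
  smooth_t : ∀ x, ContDiffOn ℝ (⊤ : ℕ∞) (fun t => Φ t x) (Ico (0 : ℝ) δ)
  smooth_t_inv : ∀ x, ContDiffOn ℝ (⊤ : ℕ∞) (fun t => Φinv t x) (Ico (0 : ℝ) δ)
  init : Ω 0 = Ω₀
  image : ∀ t ∈ Ico (0 : ℝ) δ, Ω t = Φ t '' Ω₀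

/-- The Laplacian of `f : ℝ^N → ℝ`, as the trace of the second derivative. -/
def lap (N : ℕ) (f : euc N → ℝ) (x : euc N) : ℝ :=
  ∑ i : Fin N,
    iteratedFDeriv ℝ 2 f x ![EuclideanSpace.single i 1, EuclideanSpace.single i 1]

/-- The divergence of a vector field on `ℝ^N`. -/
def diver (N : ℕ) (f : euc N → euc N) (x : euc N) : ℝ :=
  ∑ i : Fin N, ⟪fderiv ℝ f x (EuclideanSpace.single i 1), (EuclideanSpace.single i 1 : euc N)⟫

/-- The constant `G_N`: the modulus of the gradient on the boundary of the normalized first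
eigenfunction of the unit ball. -/
def GN (N : ℕ) : ℝ :=
  (besselJzero ((N : ℝ) / 2 - 1)) ^ 2 *
      deriv (besselJ ((N : ℝ) / 2 - 1)) (besselJzero ((N : ℝ) / 2 - 1)) /
    Real.sqrt (N * ballVol N *
      ∫ r in (0 : ℝ)..(besselJzero ((N : ℝ) / 2 - 1)), r * besselJ ((N : ℝ) / 2 - 1) r ^ 2)

/-- The optimal constant `C_N` of the paper. -/
def CN (N : ℕ) : ℝ :=
  (N * (N + 1) *
      ∫ r in (0 : ℝ)..(besselJzero ((N : ℝ) / 2 - 1)), r * besselJ ((N : ℝ) / 2 - 1) r ^ 2) /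
    (2 * (besselJzero ((N : ℝ) / 2 - 1) *
        deriv (besselJ ((N : ℝ) / 2 - 1)) (besselJzero ((N : ℝ) / 2 - 1))) ^ 2 *
      ((besselJzero ((N : ℝ) / 2 - 1)) ^ 2 - N))

end

/-!
Put `ν = N / 2 - 1`. Since `J_ν(x) = (x / 2) ^ ν * C_ν(-(x / 2) ^ 2)` with the entire
Bessel–Clifford function `C_ν(t) = ∑ t ^ m / (m! Γ(m + ν + 1))`, the eigenfunction is a constant
multiple of `C_ν(-(j ‖x‖ / 2) ^ 2)`, a smooth function of `‖x‖ ^ 2`. As `C_ν' = C_{ν+1}`, the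
equation `-Δu = j ^ 2 u` becomes the recurrence `C_ν = (ν + 1) C_{ν+1} + t C_{ν+2}`.

The function `C_ν(-t)` has a zero in `(0, (ν + 1) (ν + 2)]`: if it were positive there, it would be
decreasing, and Green's identity with a linear test function vanishing at the right endpoint,
combined with Chebyshev's integral inequality, would make it nonpositive at that endpoint. Hence `j`
is a genuine zero and `u > 0` inside the ball. Polar coordinates give the `L²` norm of `u`, and
`J_ν'(j) = -J_{ν+1}(j)` identifies the boundary gradient.
-/

section BesselClifford

lemma inv_Gamma_eq_mul_inv_Gamma_add_one (s : ℝ) :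
    (Real.Gamma s)⁻¹ = s * (Real.Gamma (s + 1))⁻¹ := by
  rcases eq_or_ne s 0 with rfl | hs
  · simp
  · rw [Real.Gamma_add_one hs, mul_inv, mul_inv_cancel_left₀ hs]

/-- The Taylor coefficients of the Bessel–Clifford function. At the poles of `Γ` the convention
`0⁻¹ = 0` agrees with the zeros of the entire function `1 / Γ`, so every real order is allowed. -/
noncomputable def besselCliffordCoeff (ν : ℝ) (m : ℕ) : ℝ :=
  (m.factorial : ℝ)⁻¹ * (Real.Gamma (m + ν + 1))⁻¹

/-- The Bessel–Clifford function `C_ν`, the entire function with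
`J_ν(x) = (x / 2) ^ ν * C_ν(-(x / 2) ^ 2)`. -/
noncomputable def besselClifford (ν t : ℝ) : ℝ := ∑' m : ℕ, besselCliffordCoeff ν m * t ^ m

lemma succ_mul_besselCliffordCoeff_succ (ν : ℝ) (m : ℕ) :
    (m + 1) * besselCliffordCoeff ν (m + 1) = besselCliffordCoeff (ν + 1) m := by
  have hm : (m : ℝ) + 1 ≠ 0 := by positivity
  have harg : ((m + 1 : ℕ) : ℝ) + ν + 1 = m + (ν + 1) + 1 := by push_cast; ring
  rw [besselCliffordCoeff, besselCliffordCoeff, harg, Nat.factorial_succ, Nat.cast_mul, mul_inv,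
    Nat.cast_succ, ← mul_assoc, mul_inv_cancel_left₀ hm]

lemma besselCliffordCoeff_eq_mul_add_one (ν : ℝ) (m : ℕ) :
    besselCliffordCoeff ν m = (m + ν + 1) * besselCliffordCoeff (ν + 1) m := by
  rw [besselCliffordCoeff, besselCliffordCoeff, inv_Gamma_eq_mul_inv_Gamma_add_one,
    show (m : ℝ) + (ν + 1) + 1 = m + ν + 1 + 1 by ring]
  ring

lemma summable_besselClifford (ν t : ℝ) :
    Summable fun m : ℕ => besselCliffordCoeff ν m * t ^ m := by
  have hlarge : ∀ᶠ m : ℕ in atTop, 2 * |t| + 1 - ν ≤ (m : ℝ) :=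
    tendsto_natCast_atTop_atTop.eventually_ge_atTop _
  refine summable_of_ratio_norm_eventually_le (r := 1 / 2) (by norm_num) ?_
  filter_upwards [hlarge] with m hm
  have hratio : besselCliffordCoeff ν m =
      (m + ν + 1) * ((m + 1) * besselCliffordCoeff ν (m + 1)) := by
    rw [succ_mul_besselCliffordCoeff_succ, ← besselCliffordCoeff_eq_mul_add_one]
  have hpos : 0 ≤ (m : ℝ) + ν + 1 := by linarith [abs_nonneg t]
  have hgrow : 2 * |t| ≤ (m + ν + 1) * (m + 1) := by
    nlinarith [mul_nonneg hpos m.cast_nonneg]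
  rw [hratio, ← mul_assoc, norm_mul, norm_mul, norm_mul, norm_pow, norm_pow, Real.norm_eq_abs t,
    Real.norm_of_nonneg (by positivity : 0 ≤ ((m : ℝ) + ν + 1) * (m + 1)), pow_succ]
  calc ‖besselCliffordCoeff ν (m + 1)‖ * (|t| ^ m * |t|)
      = 1 / 2 * (2 * |t| * ‖besselCliffordCoeff ν (m + 1)‖ * |t| ^ m) := by ring
    _ ≤ 1 / 2 * ((m + ν + 1) * (m + 1) * ‖besselCliffordCoeff ν (m + 1)‖ * |t| ^ m) := by gcongr

lemma besselCliffordCoeff_succ_mul_deriv_pow (ν t : ℝ) (m : ℕ) :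
    besselCliffordCoeff ν (m + 1) * (((m + 1 : ℕ) : ℝ) * t ^ (m + 1 - 1)) =
      besselCliffordCoeff (ν + 1) m * t ^ m := by
  rw [← succ_mul_besselCliffordCoeff_succ, Nat.add_sub_cancel]
  push_cast
  ring

lemma hasSum_deriv_besselClifford (ν t : ℝ) :
    HasSum (fun m : ℕ => besselCliffordCoeff ν m * (m * t ^ (m - 1)))
      (besselClifford (ν + 1) t) := by
  rw [← hasSum_nat_add_iff' 1]
  simpa only [besselClifford, besselCliffordCoeff_succ_mul_deriv_pow, Finset.range_one,
    Finset.sum_singleton, Nat.cast_zero, zero_mul, mul_zero, sub_zero] using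
      (summable_besselClifford (ν + 1) t).hasSum

lemma hasDerivAt_besselClifford (ν t : ℝ) :
    HasDerivAt (besselClifford ν) (besselClifford (ν + 1) t) t := by
  have hbound : ∀ (m : ℕ), ∀ y ∈ ball (0 : ℝ) (|t| + 1),
      ‖besselCliffordCoeff ν m * (m * y ^ (m - 1))‖ ≤
        ‖besselCliffordCoeff ν m * (m * (|t| + 1) ^ (m - 1))‖ := by
    intro m y hy
    have hy' : ‖y‖ ≤ ‖|t| + 1‖ := by
      rw [Real.norm_of_nonneg (by positivity : 0 ≤ |t| + 1)]
      exact (mem_ball_zero_iff.1 hy).le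
    simp only [norm_mul, norm_pow]
    gcongr
  have hderiv := hasDerivAt_tsum_of_isPreconnected
    (hasSum_deriv_besselClifford ν (|t| + 1)).summable.norm isOpen_ball
    (convex_ball _ _).isPreconnected
    (fun m y _ => (hasDerivAt_pow m y).const_mul (besselCliffordCoeff ν m)) hbound
    (mem_ball_self (by positivity)) (summable_besselClifford ν 0)
    (mem_ball_zero_iff.2 (lt_add_one |t|) : t ∈ _)
  rwa [(hasSum_deriv_besselClifford ν t).tsum_eq] at hderiv

lemma contDiff_besselClifford (ν : ℝ) : ContDiff ℝ (⊤ : ℕ∞) (besselClifford ν) := by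
  refine contDiff_infty.2 fun n => ?_
  induction n generalizing ν with
  | zero =>
    exact contDiff_zero.2 <|
      continuous_iff_continuousAt.2 fun t => (hasDerivAt_besselClifford ν t).continuousAt
  | succ n ih =>
    have hderiv : deriv (besselClifford ν) = besselClifford (ν + 1) :=
      funext fun t => (hasDerivAt_besselClifford ν t).deriv
    rw [Nat.cast_succ, contDiff_succ_iff_deriv, hderiv]
    exact ⟨fun t => (hasDerivAt_besselClifford ν t).differentiableAt, by simp, ih (ν + 1)⟩

lemma continuous_besselClifford (ν : ℝ) : Continuous (besselClifford ν) :=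
  (contDiff_besselClifford ν).continuous

lemma hasDerivAt_besselClifford_neg (ν t : ℝ) :
    HasDerivAt (fun s => besselClifford ν (-s)) (-besselClifford (ν + 1) (-t)) t :=
  ((hasDerivAt_besselClifford ν (-t)).comp t (hasDerivAt_neg t)).congr_deriv (mul_neg_one _)

lemma besselClifford_recurrence (ν t : ℝ) :
    besselClifford ν t =
      (ν + 1) * besselClifford (ν + 1) t + t * besselClifford (ν + 2) t := by
  have hderiv := (hasSum_deriv_besselClifford (ν + 1) t).mul_left t
  rw [show ν + 1 + 1 = ν + 2 by ring] at hderiv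
  have hsum := ((summable_besselClifford (ν + 1) t).hasSum.mul_left (ν + 1)).add hderiv
  refine (summable_besselClifford ν t).hasSum.unique (hsum.congr_fun fun m => ?_)
  rw [besselCliffordCoeff_eq_mul_add_one ν m]
  rcases m with _ | m
  · simp
  · rw [Nat.add_sub_cancel]
    ring

lemma besselClifford_zero_pos {ν : ℝ} (hν : -1 < ν) : 0 < besselClifford ν 0 := by
  have hΓ : 0 < Real.Gamma (ν + 1) := Real.Gamma_pos_of_pos (by linarith)
  rw [besselClifford, tsum_eq_single 0 fun m hm => by simp [hm]]
  simpa [besselCliffordCoeff] using hΓ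

end BesselClifford

section BesselJ

lemma besselJ_eq_rpow_mul_besselClifford (ν : ℝ) {x : ℝ} (hx : 0 < x) :
    besselJ ν x = (x / 2) ^ ν * besselClifford ν (-(x / 2) ^ 2) := by
  rw [besselJ, besselClifford, ← tsum_mul_left]
  refine tsum_congr fun m => ?_
  have hpow : (x / 2) ^ (2 * (m : ℝ)) = ((x / 2) ^ 2) ^ m := by
    rw [← pow_mul, ← Real.rpow_natCast, Nat.cast_mul, Nat.cast_ofNat]
  rw [Real.rpow_add (by positivity), hpow, neg_pow (_ ^ 2), besselCliffordCoeff, div_eq_mul_inv,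
    mul_inv]
  ring

lemma besselJ_eq_zero_iff (ν : ℝ) {x : ℝ} (hx : 0 < x) :
    besselJ ν x = 0 ↔ besselClifford ν (-(x / 2) ^ 2) = 0 := by
  rw [besselJ_eq_rpow_mul_besselClifford ν hx,
    mul_eq_zero_iff_left (Real.rpow_pos_of_pos (half_pos hx) ν).ne']

lemma hasDerivAt_besselJ (ν : ℝ) {x : ℝ} (hx : 0 < x) :
    HasDerivAt (besselJ ν) (ν / x * besselJ ν x - besselJ (ν + 1) x) x := by
  have hrpow : HasDerivAt (fun y : ℝ => (y / 2) ^ ν) (1 / 2 * ν * (x / 2) ^ (ν - 1)) x :=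
    ((hasDerivAt_id x).div_const 2).rpow_const (Or.inl (half_pos hx).ne')
  have hsq : HasDerivAt (fun y : ℝ => (y / 2) ^ 2) (x / 2) x :=
    (((hasDerivAt_id x).div_const 2).pow 2).congr_deriv (by simp only [id]; ring)
  have hprod := hrpow.mul ((hasDerivAt_besselClifford_neg ν ((x / 2) ^ 2)).comp x hsq)
  have heq : besselJ ν =ᶠ[𝓝 x] fun y => (y / 2) ^ ν * besselClifford ν (-(y / 2) ^ 2) := by
    filter_upwards [lt_mem_nhds hx] with y hy
    exact besselJ_eq_rpow_mul_besselClifford ν hy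
  refine (hprod.congr_of_eventuallyEq heq).congr_deriv ?_
  rw [besselJ_eq_rpow_mul_besselClifford ν hx, besselJ_eq_rpow_mul_besselClifford (ν + 1) hx,
    Real.rpow_sub_one (half_pos hx).ne', Real.rpow_add_one (half_pos hx).ne']
  simp only [Function.comp_apply]
  field_simp
  ring

end BesselJ

section FirstZero

variable {ν T : ℝ}

lemma hasDerivAt_rpow_mul_besselClifford_neg (ν : ℝ) {t : ℝ} (ht : 0 < t) :
    HasDerivAt (fun s : ℝ => s ^ (ν + 1) * besselClifford (ν + 1) (-s))
      (t ^ ν * besselClifford ν (-t)) t := by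
  refine ((Real.hasDerivAt_rpow_const (Or.inl ht.ne')).mul
    (hasDerivAt_besselClifford_neg (ν + 1) t)).congr_deriv ?_
  rw [besselClifford_recurrence ν, add_sub_cancel_right, Real.rpow_add_one ht.ne',
    show ν + 1 + 1 = ν + 2 by ring]
  ring

lemma besselClifford_add_one_neg_pos (hν : -1 < ν)
    (hpos : ∀ t ∈ Ioo 0 T, 0 < besselClifford ν (-t)) {t : ℝ} (ht : t ∈ Ioc 0 T) :
    0 < besselClifford (ν + 1) (-t) := by
  have hmono : StrictMonoOn (fun s : ℝ => s ^ (ν + 1) * besselClifford (ν + 1) (-s))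
      (Icc 0 T) := by
    refine strictMonoOn_of_hasDerivWithinAt_pos (convex_Icc 0 T) ?_
      (f' := fun s => s ^ ν * besselClifford ν (-s)) ?_ ?_
    · exact ((Real.continuous_rpow_const (by linarith)).mul
        ((continuous_besselClifford _).comp continuous_neg)).continuousOn
    · intro s hs
      rw [interior_Icc] at hs
      exact (hasDerivAt_rpow_mul_besselClifford_neg ν hs.1).hasDerivWithinAt
    · intro s hs
      rw [interior_Icc] at hs
      exact mul_pos (Real.rpow_pos_of_pos hs.1 ν) (hpos s hs)
  have hlt := hmono (left_mem_Icc.2 (ht.1.le.trans ht.2)) (Ioc_subset_Icc_self ht) ht.1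
  simp only [Real.zero_rpow (by linarith : ν + 1 ≠ 0), zero_mul] at hlt
  exact pos_of_mul_pos_right hlt (Real.rpow_pos_of_pos ht.1 _).le

lemma antitoneOn_besselClifford_neg (hν : -1 < ν)
    (hpos : ∀ t ∈ Ioo 0 T, 0 < besselClifford ν (-t)) :
    AntitoneOn (fun t => besselClifford ν (-t)) (Icc 0 T) := by
  refine antitoneOn_of_hasDerivWithinAt_nonpos (convex_Icc 0 T)
    ((continuous_besselClifford ν).comp continuous_neg).continuousOn
    (fun t _ => (hasDerivAt_besselClifford_neg ν t).hasDerivWithinAt) fun t ht => ?_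
  rw [interior_Icc] at ht
  exact neg_nonpos.2 (besselClifford_add_one_neg_pos hν hpos (Ioo_subset_Ioc_self ht)).le

/-- The integral `∫₀ᵗ s ^ ν * (C_ν(-s) - c) * (s - (ν + 1) ^ 2) ds`, in the closed form that
Green's identity for `C_ν(-s)` and the test function `(ν + 1) * (ν + 2) - s` gives it. -/
noncomputable def greenIntegral (ν c t : ℝ) : ℝ :=
  t ^ (ν + 1) * besselClifford ν (-t) -
    ((ν + 1) * (ν + 2) - t) * (t ^ (ν + 1) * besselClifford (ν + 1) (-t)) -
    c * (t ^ (ν + 1) * (t / (ν + 2) - (ν + 1)))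

lemma hasDerivAt_greenIntegral (hν : -1 < ν) (c : ℝ) {t : ℝ} (ht : 0 < t) :
    HasDerivAt (greenIntegral ν c)
      (t ^ ν * ((besselClifford ν (-t) - c) * (t - (ν + 1) ^ 2))) t := by
  have hν₂ : ν + 2 ≠ 0 := by linarith
  have hrpow := Real.hasDerivAt_rpow_const (x := t) (p := ν + 1) (Or.inl ht.ne')
  have htest : HasDerivAt (fun s => (ν + 1) * (ν + 2) - s) (-1) t := by
    simpa using (hasDerivAt_id t).const_sub ((ν + 1) * (ν + 2))
  have hlin : HasDerivAt (fun s => s / (ν + 2) - (ν + 1)) (1 / (ν + 2)) t :=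
    ((hasDerivAt_id t).div_const _).sub_const _
  refine (((hrpow.mul (hasDerivAt_besselClifford_neg ν t)).sub
    (htest.mul (hasDerivAt_rpow_mul_besselClifford_neg ν ht))).sub
    ((hrpow.mul hlin).const_mul c)).congr_deriv ?_
  rw [add_sub_cancel_right, Real.rpow_add_one ht.ne']
  field_simp
  ring

lemma continuous_greenIntegral (hν : -1 < ν) (c : ℝ) : Continuous (greenIntegral ν c) := by
  have hrpow : Continuous fun t : ℝ => t ^ (ν + 1) := Real.continuous_rpow_const (by linarith)
  have hC := continuous_besselClifford
  unfold greenIntegral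
  fun_prop

-- The subtracted constant is the value of `C_ν(-t)` where the weight `t - (ν + 1) ^ 2` changes
-- sign, so the integrand is nonpositive, as in Chebyshev's integral inequality.
lemma antitoneOn_greenIntegral (hν : -1 < ν) (hT : (ν + 1) ^ 2 ≤ T)
    (hpos : ∀ t ∈ Ioo 0 T, 0 < besselClifford ν (-t)) :
    AntitoneOn (greenIntegral ν (besselClifford ν (-(ν + 1) ^ 2))) (Icc 0 T) := by
  set c := besselClifford ν (-(ν + 1) ^ 2)
  have hanti := antitoneOn_besselClifford_neg hν hpos
  have hmem : (ν + 1) ^ 2 ∈ Icc 0 T := ⟨by positivity, hT⟩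
  refine antitoneOn_of_hasDerivWithinAt_nonpos (convex_Icc 0 T)
    (f' := fun t => t ^ ν * ((besselClifford ν (-t) - c) * (t - (ν + 1) ^ 2)))
    (continuous_greenIntegral hν c).continuousOn ?_ ?_ <;> intro t ht <;> rw [interior_Icc] at ht
  · exact (hasDerivAt_greenIntegral hν c ht.1).hasDerivWithinAt
  · refine mul_nonpos_of_nonneg_of_nonpos (Real.rpow_nonneg ht.1.le ν) ?_
    rcases le_total t ((ν + 1) ^ 2) with hle | hge
    · exact mul_nonpos_of_nonneg_of_nonpos
        (sub_nonneg.2 (hanti (Ioo_subset_Icc_self ht) hmem hle)) (sub_nonpos.2 hle)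
    · exact mul_nonpos_of_nonpos_of_nonneg
        (sub_nonpos.2 (hanti hmem (Ioo_subset_Icc_self ht) hge)) (sub_nonneg.2 hge)

lemma exists_besselClifford_neg_nonpos (hν : -1 < ν) :
    ∃ t ∈ Ioc 0 ((ν + 1) * (ν + 2)), besselClifford ν (-t) ≤ 0 := by
  by_contra! hpos
  set T := (ν + 1) * (ν + 2) with hT
  have hν₁ : 0 < ν + 1 := by linarith
  have hTpos : 0 < T := mul_pos hν₁ (by linarith)
  have hanti := antitoneOn_greenIntegral hν (by rw [hT]; nlinarith : (ν + 1) ^ 2 ≤ T)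
    fun t ht => hpos t (Ioo_subset_Ioc_self ht)
  have hle := hanti (left_mem_Icc.2 hTpos.le) (right_mem_Icc.2 hTpos.le) hTpos.le
  have hstart (c : ℝ) : greenIntegral ν c 0 = 0 := by
    simp [greenIntegral, Real.zero_rpow hν₁.ne']
  have hend (c : ℝ) : greenIntegral ν c T = T ^ (ν + 1) * besselClifford ν (-T) := by
    rw [greenIntegral, ← hT, sub_self, hT, mul_div_cancel_right₀ _ (by linarith : ν + 2 ≠ 0)]
    ring
  rw [hstart, hend] at hle
  exact hle.not_gt (mul_pos (Real.rpow_pos_of_pos hTpos _) (hpos T (right_mem_Ioc.2 hTpos)))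

lemma setOf_besselJ_eq_zero (hν : -1 < ν) :
    {x : ℝ | 0 < x ∧ besselJ ν x = 0} =
      Ici 0 ∩ {x : ℝ | besselClifford ν (-(x / 2) ^ 2) = 0} := by
  ext x
  refine ⟨fun ⟨hx, hJ⟩ => ⟨hx.le, (besselJ_eq_zero_iff ν hx).1 hJ⟩, fun ⟨hx, hC⟩ => ?_⟩
  have hx₀ : 0 ≠ x := by
    rintro rfl
    exact (besselClifford_zero_pos hν).ne' (by simpa using hC)
  have hxpos : 0 < x := lt_of_le_of_ne hx hx₀
  exact ⟨hxpos, (besselJ_eq_zero_iff ν hxpos).2 hC⟩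

lemma continuous_besselClifford_neg_sq (ν : ℝ) :
    Continuous fun x : ℝ => besselClifford ν (-(x / 2) ^ 2) :=
  (continuous_besselClifford ν).comp (by fun_prop)

lemma exists_le_besselClifford_neg_sq_eq_zero (hν : -1 < ν) {y : ℝ} (hy : 0 ≤ y)
    (hC : besselClifford ν (-(y / 2) ^ 2) ≤ 0) :
    ∃ x ∈ Icc 0 y, besselClifford ν (-(x / 2) ^ 2) = 0 :=
  intermediate_value_Icc' hy (continuous_besselClifford_neg_sq ν).continuousOn
    ⟨hC, by simpa using (besselClifford_zero_pos hν).le⟩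

lemma besselJzero_mem (hν : -1 < ν) :
    besselJzero ν ∈ {x : ℝ | 0 < x ∧ besselJ ν x = 0} := by
  rw [besselJzero, setOf_besselJ_eq_zero hν]
  refine IsClosed.csInf_mem
    (isClosed_Ici.inter (isClosed_eq (continuous_besselClifford_neg_sq ν) continuous_const)) ?_
    ⟨0, fun x hx => hx.1⟩
  obtain ⟨t, ht, hC⟩ := exists_besselClifford_neg_nonpos hν
  obtain ⟨x, hx, hzero⟩ := exists_le_besselClifford_neg_sq_eq_zero hν
    (y := 2 * √t) (by positivity) (by simpa [Real.sq_sqrt ht.1.le] using hC)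
  exact ⟨x, hx.1, hzero⟩

lemma besselJzero_pos (hν : -1 < ν) : 0 < besselJzero ν := (besselJzero_mem hν).1

lemma besselJ_besselJzero (hν : -1 < ν) : besselJ ν (besselJzero ν) = 0 := (besselJzero_mem hν).2

lemma besselClifford_neg_sq_pos_of_lt_besselJzero (hν : -1 < ν) {x : ℝ} (hx : 0 ≤ x)
    (hlt : x < besselJzero ν) : 0 < besselClifford ν (-(x / 2) ^ 2) := by
  by_contra! hC
  obtain ⟨y, hy, hzero⟩ := exists_le_besselClifford_neg_sq_eq_zero hν hx hC
  have hle : besselJzero ν ≤ y := by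
    refine csInf_le ⟨0, fun z hz => hz.1.le⟩ ?_
    rw [setOf_besselJ_eq_zero hν]
    exact ⟨hy.1, hzero⟩
  exact (hle.trans hy.2).not_gt hlt

end FirstZero

section Radial

variable {E : Type*} [NormedAddCommGroup E] [InnerProductSpace ℝ E]

lemma hasFDerivAt_comp_norm_sq {f : ℝ → ℝ} {f' : ℝ} {x : E} (hf : HasDerivAt f f' (‖x‖ ^ 2)) :
    HasFDerivAt (fun y : E => f (‖y‖ ^ 2)) ((2 * f') • innerSL ℝ x) x := by
  refine (hf.comp_hasFDerivAt x (hasStrictFDerivAt_norm_sq x).hasFDerivAt).congr_fderiv ?_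
  module

lemma hasGradientAt_comp_norm_sq [CompleteSpace E] {f : ℝ → ℝ} {f' : ℝ} {x : E}
    (hf : HasDerivAt f f' (‖x‖ ^ 2)) :
    HasGradientAt (fun y : E => f (‖y‖ ^ 2)) ((2 * f') • x) x := by
  rw [hasGradientAt_iff_hasFDerivAt]
  refine (hasFDerivAt_comp_norm_sq hf).congr_fderiv ?_
  ext v
  simp

lemma iteratedFDeriv_two_comp_norm_sq_apply {f f' : ℝ → ℝ} {f'' : ℝ} {x : E}
    (hf : ∀ t, HasDerivAt f (f' t) t) (hf' : HasDerivAt f' f'' (‖x‖ ^ 2)) (v w : E) :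
    iteratedFDeriv ℝ 2 (fun y : E => f (‖y‖ ^ 2)) x ![v, w] =
      2 * f' (‖x‖ ^ 2) * ⟪v, w⟫ + 4 * f'' * (⟪x, v⟫ * ⟪x, w⟫) := by
  have hfderiv : fderiv ℝ (fun y : E => f (‖y‖ ^ 2)) =
      fun y => (2 * f' (‖y‖ ^ 2)) • innerSL ℝ y :=
    funext fun y => (hasFDerivAt_comp_norm_sq (hf _)).fderiv
  have hsecond : HasFDerivAt (fun y : E => (2 * f' (‖y‖ ^ 2)) • innerSL ℝ y) _ x :=
    ((hasFDerivAt_comp_norm_sq hf').const_mul 2).smul (innerSL ℝ).hasFDerivAt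
  rw [iteratedFDeriv_two_apply, hfderiv, hsecond.fderiv]
  change 2 * f' (‖x‖ ^ 2) * ⟪v, w⟫ + 2 * (2 * f'' * ⟪x, v⟫) * ⟪x, w⟫ = _
  ring

lemma lap_comp_norm_sq {N : ℕ} {f f' : ℝ → ℝ} {f'' : ℝ} {x : euc N}
    (hf : ∀ t, HasDerivAt f (f' t) t) (hf' : HasDerivAt f' f'' (‖x‖ ^ 2)) :
    lap N (fun y => f (‖y‖ ^ 2)) x = 2 * N * f' (‖x‖ ^ 2) + 4 * ‖x‖ ^ 2 * f'' := by
  have hsq : ∑ i, x i * x i = ‖x‖ ^ 2 := by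
    simp [EuclideanSpace.norm_sq_eq, ← sq]
  simp only [lap, iteratedFDeriv_two_comp_norm_sq_apply hf hf', EuclideanSpace.inner_single_right,
    EuclideanSpace.single, PiLp.single_apply, if_true, conj_trivial, one_mul,
    Finset.sum_add_distrib, ← Finset.mul_sum, hsq, Finset.sum_const, Finset.card_univ,
    Fintype.card_fin, nsmul_eq_mul]
  ring

lemma lap_const_mul {N : ℕ} {f : euc N → ℝ} {x : euc N} (hf : ContDiffAt ℝ 2 f x) (c : ℝ) :
    lap N (fun y => c * f y) x = c * lap N f x := by
  have hsmul := iteratedFDeriv_const_smul_apply' (a := c) hf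
  simp only [smul_eq_mul] at hsmul
  simp only [lap, hsmul, smul_apply, smul_eq_mul, Finset.mul_sum]

lemma gradient_const_mul [CompleteSpace E] {f : E → ℝ} {x : E} (hf : DifferentiableAt ℝ f x)
    (c : ℝ) : gradient (fun y => c * f y) x = c • gradient f x := by
  rw [gradient, fderiv_const_mul hf, map_smul, gradient]

lemma setIntegral_ball_fun_norm_addHaar {V F : Type*} [NormedAddCommGroup V] [NormedSpace ℝ V]
    [FiniteDimensional ℝ V] [Nontrivial V] [MeasurableSpace V] [BorelSpace V]
    [NormedAddCommGroup F] [NormedSpace ℝ F] (μ : Measure V) [μ.IsAddHaarMeasure]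
    (f : ℝ → F) {R : ℝ} (hR : 0 ≤ R) :
    ∫ x in ball (0 : V) R, f ‖x‖ ∂μ = Module.finrank ℝ V • μ.real (ball 0 1) •
      ∫ r in (0 : ℝ)..R, r ^ (Module.finrank ℝ V - 1) • f r := by
  have hball : (fun x : V => (Iio R).indicator f ‖x‖) =
      (ball (0 : V) R).indicator fun x => f ‖x‖ := by
    ext x
    simp [indicator]
  rw [← integral_indicator measurableSet_ball, ← hball, integral_fun_norm_addHaar μ]
  have hsmul (r : ℝ) : r ^ (Module.finrank ℝ V - 1) • (Iio R).indicator f r =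
      (Iio R).indicator (fun r => r ^ (Module.finrank ℝ V - 1) • f r) r :=
    (indicator_smul_apply (Iio R) (fun r => r ^ (Module.finrank ℝ V - 1)) f r).symm
  simp only [hsmul]
  rw [setIntegral_indicator measurableSet_Iio, intervalIntegral.integral_of_le hR, Ioi_inter_Iio,
    integral_Ioc_eq_integral_Ioo]

end Radial

section RadialBessel

/-- The function `x ↦ C_ν(-(a ‖x‖ / 2) ^ 2)`, the smooth extension to the origin of
`x ↦ (a ‖x‖ / 2) ^ (-ν) * J_ν(a ‖x‖)`. -/
noncomputable def radialBessel {E : Type*} [Norm E] (ν a : ℝ) (x : E) : ℝ :=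
  besselClifford ν (-(a / 2) ^ 2 * ‖x‖ ^ 2)

lemma radialBessel_eq_besselClifford {E : Type*} [Norm E] (ν a : ℝ) (x : E) :
    radialBessel ν a x = besselClifford ν (-(a * ‖x‖ / 2) ^ 2) := by
  rw [radialBessel]
  ring_nf

lemma besselJ_mul_norm {E : Type*} [NormedAddCommGroup E] (ν : ℝ) {a : ℝ} (ha : 0 < a) {x : E}
    (hx : x ≠ 0) :
    besselJ ν (a * ‖x‖) = (a / 2) ^ ν * ‖x‖ ^ ν * radialBessel ν a x := by
  have hnorm : 0 < ‖x‖ := norm_pos_iff.2 hx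
  rw [besselJ_eq_rpow_mul_besselClifford ν (mul_pos ha hnorm), radialBessel_eq_besselClifford,
    ← Real.mul_rpow (half_pos ha).le hnorm.le, div_mul_eq_mul_div]

variable {E : Type*} [NormedAddCommGroup E] [InnerProductSpace ℝ E]

lemma contDiff_radialBessel (ν a : ℝ) :
    ContDiff ℝ (⊤ : ℕ∞) (radialBessel ν a : E → ℝ) :=
  (contDiff_besselClifford ν).comp (contDiff_const.mul (contDiff_norm_sq ℝ))

lemma hasDerivAt_besselClifford_mul (ν c t : ℝ) :
    HasDerivAt (fun s => besselClifford ν (c * s)) (c * besselClifford (ν + 1) (c * t)) t :=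
  ((hasDerivAt_besselClifford ν (c * t)).comp t (hasDerivAt_const_mul c)).congr_deriv
    (mul_comm _ _)

lemma lap_radialBessel (N : ℕ) (a : ℝ) (x : euc N) :
    lap N (radialBessel ((N : ℝ) / 2 - 1) a) x =
      -(a ^ 2 * radialBessel ((N : ℝ) / 2 - 1) a x) := by
  set ν := (N : ℝ) / 2 - 1 with hν
  have hN : (N : ℝ) = 2 * (ν + 1) := by rw [hν]; ring
  have hlap := lap_comp_norm_sq (x := x) (hasDerivAt_besselClifford_mul ν (-(a / 2) ^ 2))
    ((hasDerivAt_besselClifford_mul (ν + 1) (-(a / 2) ^ 2) (‖x‖ ^ 2)).const_mul _)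
  rw [show ν + 1 + 1 = ν + 2 by ring] at hlap
  refine hlap.trans ?_
  rw [radialBessel, besselClifford_recurrence ν, hN]
  ring

lemma hasGradientAt_radialBessel [CompleteSpace E] (ν a : ℝ) (x : E) :
    HasGradientAt (radialBessel ν a) (-(a ^ 2 / 2 * radialBessel (ν + 1) a x) • x) x := by
  have hgrad := hasGradientAt_comp_norm_sq
    (hasDerivAt_besselClifford_mul ν (-(a / 2) ^ 2) (‖x‖ ^ 2))
  have hcoeff : 2 * (-(a / 2) ^ 2 * besselClifford (ν + 1) (-(a / 2) ^ 2 * ‖x‖ ^ 2)) =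
      -(a ^ 2 / 2 * radialBessel (ν + 1) a x) := by
    rw [radialBessel]
    ring
  rwa [hcoeff] at hgrad

lemma norm_gradient_radialBessel [CompleteSpace E] (ν : ℝ) {a : ℝ} (ha : 0 < a) {x : E}
    (hx : ‖x‖ = 1) :
    (a / 2) ^ ν * ‖gradient (radialBessel ν a) x‖ = a * |besselJ (ν + 1) a| := by
  have hJ := besselJ_mul_norm (ν + 1) ha (norm_ne_zero_iff.1 (hx.trans_ne one_ne_zero))
  rw [hx, mul_one, Real.one_rpow, mul_one, Real.rpow_add_one (half_pos ha).ne'] at hJ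
  rw [(hasGradientAt_radialBessel ν a x).gradient, norm_smul, hx, mul_one, Real.norm_eq_abs,
    abs_neg, hJ, abs_mul, abs_mul, abs_of_pos (by positivity : 0 < a ^ 2 / 2),
    abs_of_pos (by positivity : 0 < (a / 2) ^ ν * (a / 2))]
  ring

lemma integral_mul_besselJ_sq (ν : ℝ) {a : ℝ} (ha : 0 < a) :
    ∫ r in (0 : ℝ)..a, r * besselJ ν r ^ 2 =
      (a * (a / 2) ^ ν) ^ 2 * ∫ r in (0 : ℝ)..1, r ^ (2 * ν + 1) * radialBessel ν a r ^ 2 := by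
  have hscale := intervalIntegral.mul_integral_comp_mul_left (a := 0) (b := 1) (c := a)
    (f := fun r => r * besselJ ν r ^ 2)
  rw [mul_zero, mul_one] at hscale
  rw [← hscale, ← intervalIntegral.integral_const_mul, ← intervalIntegral.integral_const_mul]
  refine intervalIntegral.integral_congr_ae (Eventually.of_forall fun r hr => ?_)
  rw [uIoc_of_le zero_le_one] at hr
  have hJ := besselJ_mul_norm ν ha hr.1.ne'
  rw [Real.norm_of_nonneg hr.1.le] at hJ
  have hpow : r ^ (2 * ν + 1) = r * (r ^ ν) ^ 2 := by
    rw [Real.rpow_add_one hr.1.ne', mul_comm 2 ν, Real.rpow_mul hr.1.le, Real.rpow_ofNat, mul_comm]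
  rw [hJ, hpow]
  ring

lemma integral_ball_radialBessel_sq {N : ℕ} (hN : 0 < N) {a : ℝ} (ha : 0 < a) :
    (a * (a / 2) ^ ((N : ℝ) / 2 - 1)) ^ 2 *
        ∫ x in ball (0 : euc N) 1, radialBessel ((N : ℝ) / 2 - 1) a x ^ 2 =
      N * ballVol N * ∫ r in (0 : ℝ)..a, r * besselJ ((N : ℝ) / 2 - 1) r ^ 2 := by
  have : Nonempty (Fin N) := ⟨⟨0, hN⟩⟩
  have hpolar := setIntegral_ball_fun_norm_addHaar (volume : Measure (euc N))
    (fun r => besselClifford ((N : ℝ) / 2 - 1) (-(a / 2) ^ 2 * r ^ 2) ^ 2) zero_le_one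
  rw [finrank_euclideanSpace_fin, nsmul_eq_mul, smul_eq_mul, ← mul_assoc] at hpolar
  have hexp : 2 * ((N : ℝ) / 2 - 1) + 1 = (N - 1 : ℕ) := by
    rw [Nat.cast_pred hN]
    ring
  rw [integral_mul_besselJ_sq _ ha, hexp]
  simp only [radialBessel, Real.rpow_natCast, Real.norm_eq_abs, sq_abs]
  simp only [smul_eq_mul] at hpolar
  rw [hpolar, ballVol, Measure.real]
  ring

end RadialBessel

section UnitBall

variable {ν : ℝ} {E : Type*} [NormedAddCommGroup E]

lemma radialBessel_besselJzero_pos (hν : -1 < ν) {x : E} (hx : ‖x‖ < 1) :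
    0 < radialBessel ν (besselJzero ν) x := by
  have hj := besselJzero_pos hν
  rw [radialBessel_eq_besselClifford]
  exact besselClifford_neg_sq_pos_of_lt_besselJzero hν (by positivity)
    (mul_lt_of_lt_one_right hj hx)

lemma radialBessel_besselJzero_eq_zero (hν : -1 < ν) {x : E} (hx : ‖x‖ = 1) :
    radialBessel ν (besselJzero ν) x = 0 := by
  rw [radialBessel_eq_besselClifford, hx, mul_one, ← besselJ_eq_zero_iff ν (besselJzero_pos hν)]
  exact besselJ_besselJzero hν

lemma deriv_besselJ_besselJzero (hν : -1 < ν) :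
    deriv (besselJ ν) (besselJzero ν) = -besselJ (ν + 1) (besselJzero ν) := by
  rw [(hasDerivAt_besselJ ν (besselJzero_pos hν)).deriv, besselJ_besselJzero hν, mul_zero,
    zero_sub]

lemma integral_ball_radialBessel_besselJzero_sq_pos [NormedSpace ℝ E] [FiniteDimensional ℝ E]
    [MeasurableSpace E] [BorelSpace E] (μ : Measure E) [μ.IsAddHaarMeasure] (hν : -1 < ν) :
    0 < ∫ x in ball (0 : E) 1, radialBessel ν (besselJzero ν) x ^ 2 ∂μ := by
  have hcont : Continuous fun x : E => radialBessel ν (besselJzero ν) x ^ 2 :=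
    ((continuous_besselClifford ν).comp (by fun_prop)).pow 2
  have hsupport : ball (0 : E) 1 ⊆
      Function.support fun x : E => radialBessel ν (besselJzero ν) x ^ 2 := fun x hx =>
    (pow_pos (radialBessel_besselJzero_pos hν (mem_ball_zero_iff.1 hx)) 2).ne'
  rw [setIntegral_pos_iff_support_of_nonneg_ae (Eventually.of_forall fun x => sq_nonneg _)
    ((hcont.continuousOn.integrableOn_compact (isCompact_closedBall 0 1)).mono_set
      ball_subset_closedBall), inter_eq_right.2 hsupport]
  exact measure_ball_pos μ 0 one_pos

/-- The normalizing constant `(N ω_N ∫₀ʲ r J²_{N/2-1}(r) dr) ^ (1/2)`. -/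
noncomputable def eigenfunctionNorm (N : ℕ) : ℝ :=
  √(N * ballVol N * ∫ r in (0 : ℝ)..(besselJzero ((N : ℝ) / 2 - 1)),
    r * besselJ ((N : ℝ) / 2 - 1) r ^ 2)

/-- The factor in front of `radialBessel` that makes it the normalized first eigenfunction of the
unit ball of `ℝ ^ N`. -/
noncomputable def eigenfunctionAmplitude (N : ℕ) : ℝ :=
  besselJzero ((N : ℝ) / 2 - 1) * (besselJzero ((N : ℝ) / 2 - 1) / 2) ^ ((N : ℝ) / 2 - 1) /
    eigenfunctionNorm N

/-- The normalized first Dirichlet eigenfunction of the unit ball of `ℝ ^ N`, written through the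
entire function `C_ν` so that no case distinction is needed at the origin. -/
noncomputable def ballEigenfunction (N : ℕ) (x : euc N) : ℝ :=
  eigenfunctionAmplitude N * radialBessel ((N : ℝ) / 2 - 1) (besselJzero ((N : ℝ) / 2 - 1)) x

variable {N : ℕ}

lemma neg_one_lt_half_sub_one (hN : 0 < N) : -1 < (N : ℝ) / 2 - 1 := by
  have : (0 : ℝ) < N := Nat.cast_pos.2 hN
  linarith

lemma eigenfunctionNorm_sq (hN : 0 < N) :
    eigenfunctionNorm N ^ 2 =
      (besselJzero ((N : ℝ) / 2 - 1) *
        (besselJzero ((N : ℝ) / 2 - 1) / 2) ^ ((N : ℝ) / 2 - 1)) ^ 2 *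
      ∫ x in ball (0 : euc N) 1,
        radialBessel ((N : ℝ) / 2 - 1) (besselJzero ((N : ℝ) / 2 - 1)) x ^ 2 := by
  have hν := neg_one_lt_half_sub_one hN
  have hint := integral_ball_radialBessel_besselJzero_sq_pos (volume : Measure (euc N)) hν
  rw [eigenfunctionNorm, ← integral_ball_radialBessel_sq hN (besselJzero_pos hν)]
  exact Real.sq_sqrt (by positivity)

lemma eigenfunctionNorm_pos (hN : 0 < N) : 0 < eigenfunctionNorm N := by
  have hν := neg_one_lt_half_sub_one hN
  have hj := besselJzero_pos hν
  have hint := integral_ball_radialBessel_besselJzero_sq_pos (volume : Measure (euc N)) hν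
  have hsq : 0 < eigenfunctionNorm N ^ 2 := by
    rw [eigenfunctionNorm_sq hN]
    positivity
  exact (Real.sqrt_nonneg _).lt_of_ne' (pow_ne_zero_iff two_ne_zero |>.1 hsq.ne')

lemma eigenfunctionAmplitude_pos (hN : 0 < N) : 0 < eigenfunctionAmplitude N := by
  have hj := besselJzero_pos (neg_one_lt_half_sub_one hN)
  have hnorm := eigenfunctionNorm_pos hN
  unfold eigenfunctionAmplitude
  positivity

lemma contDiff_ballEigenfunction (N : ℕ) : ContDiff ℝ (⊤ : ℕ∞) (ballEigenfunction N) :=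
  contDiff_const.mul (contDiff_radialBessel _ _)

lemma ballEigenfunction_eq (hN : 0 < N) {x : euc N} (hx : x ≠ 0) :
    ballEigenfunction N x =
      besselJzero ((N : ℝ) / 2 - 1) * ‖x‖ ^ ((1 : ℝ) - N / 2) *
        besselJ ((N : ℝ) / 2 - 1) (besselJzero ((N : ℝ) / 2 - 1) * ‖x‖) /
          eigenfunctionNorm N := by
  have hj := besselJzero_pos (neg_one_lt_half_sub_one hN)
  have hnorm : 0 < ‖x‖ := norm_pos_iff.2 hx
  have hcancel : ‖x‖ ^ ((1 : ℝ) - N / 2) * ‖x‖ ^ ((N : ℝ) / 2 - 1) = 1 := by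
    rw [← Real.rpow_add hnorm, sub_add_sub_cancel', sub_self, Real.rpow_zero]
  rw [besselJ_mul_norm _ hj hx, ballEigenfunction, eigenfunctionAmplitude]
  linear_combination -(besselJzero ((N : ℝ) / 2 - 1) *
    (besselJzero ((N : ℝ) / 2 - 1) / 2) ^ ((N : ℝ) / 2 - 1) *
    radialBessel ((N : ℝ) / 2 - 1) (besselJzero ((N : ℝ) / 2 - 1)) x /
      eigenfunctionNorm N) * hcancel

lemma ballEigenfunction_pos (hN : 0 < N) {x : euc N} (hx : ‖x‖ < 1) :
    0 < ballEigenfunction N x :=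
  mul_pos (eigenfunctionAmplitude_pos hN)
    (radialBessel_besselJzero_pos (neg_one_lt_half_sub_one hN) hx)

lemma ballEigenfunction_eq_zero (hN : 0 < N) {x : euc N} (hx : ‖x‖ = 1) :
    ballEigenfunction N x = 0 := by
  rw [ballEigenfunction, radialBessel_besselJzero_eq_zero (neg_one_lt_half_sub_one hN) hx, mul_zero]

lemma neg_lap_ballEigenfunction (N : ℕ) (x : euc N) :
    -lap N (ballEigenfunction N) x =
      besselJzero ((N : ℝ) / 2 - 1) ^ 2 * ballEigenfunction N x := by
  unfold ballEigenfunction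
  rw [lap_const_mul (contDiff_infty.1 (contDiff_radialBessel _ _) 2).contDiffAt, lap_radialBessel]
  ring

lemma integral_ball_ballEigenfunction_sq (hN : 0 < N) :
    ∫ x in ball (0 : euc N) 1, ballEigenfunction N x ^ 2 = 1 := by
  simp only [ballEigenfunction, mul_pow]
  rw [integral_const_mul, eigenfunctionAmplitude, div_pow, div_mul_eq_mul_div,
    ← eigenfunctionNorm_sq hN, div_self (pow_ne_zero 2 (eigenfunctionNorm_pos hN).ne')]

lemma norm_gradient_ballEigenfunction (hN : 0 < N) {x : euc N} (hx : ‖x‖ = 1) :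
    ‖gradient (ballEigenfunction N) x‖ = |GN N| := by
  have hν := neg_one_lt_half_sub_one hN
  have hj := besselJzero_pos hν
  have hGN : GN N = besselJzero ((N : ℝ) / 2 - 1) ^ 2 *
      deriv (besselJ ((N : ℝ) / 2 - 1)) (besselJzero ((N : ℝ) / 2 - 1)) /
        eigenfunctionNorm N := rfl
  have hgrad := norm_gradient_radialBessel ((N : ℝ) / 2 - 1) hj hx
  unfold ballEigenfunction
  rw [gradient_const_mul ((hasGradientAt_radialBessel _ _ x).differentiableAt), norm_smul,
    Real.norm_of_nonneg (eigenfunctionAmplitude_pos hN).le, hGN, deriv_besselJ_besselJzero hν,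
    abs_div, abs_mul, abs_neg, abs_of_pos (eigenfunctionNorm_pos hN), abs_of_pos (pow_pos hj 2),
    eigenfunctionAmplitude]
  linear_combination (besselJzero ((N : ℝ) / 2 - 1) / eigenfunctionNorm N) * hgrad

end UnitBall

theorem unit_ball_first_eigenfunction_general (N : ℕ) (hN : 0 < N) :
    ∃ U : euc N → ℝ,
      ContDiff ℝ (⊤ : ℕ∞) U ∧
      (∀ x : euc N, x ≠ 0 →
        U x = besselJzero ((N : ℝ) / 2 - 1) * ‖x‖ ^ ((1 : ℝ) - N / 2) *
            besselJ ((N : ℝ) / 2 - 1) (besselJzero ((N : ℝ) / 2 - 1) * ‖x‖) /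
          Real.sqrt (N * ballVol N *
            ∫ r in (0 : ℝ)..(besselJzero ((N : ℝ) / 2 - 1)),
              r * besselJ ((N : ℝ) / 2 - 1) r ^ 2)) ∧
      (∀ x ∈ ball (0 : euc N) 1, 0 < U x) ∧
      (∀ x ∈ sphere (0 : euc N) 1, U x = 0) ∧
      (∀ x : euc N, -lap N U x = besselJzero ((N : ℝ) / 2 - 1) ^ 2 * U x) ∧
      (∫ x in ball (0 : euc N) 1, U x ^ 2 = 1) ∧
      (∀ x ∈ sphere (0 : euc N) 1, ‖gradient U x‖ = |GN N|) :=
  ⟨ballEigenfunction N, contDiff_ballEigenfunction N,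
    fun _ hx => ballEigenfunction_eq hN hx,
    fun _ hx => ballEigenfunction_pos hN (mem_ball_zero_iff.1 hx),
    fun _ hx => ballEigenfunction_eq_zero hN (mem_sphere_zero_iff_norm.1 hx),
    neg_lap_ballEigenfunction N,
    integral_ball_ballEigenfunction_sq hN,
    fun _ hx => norm_gradient_ballEigenfunction hN (mem_sphere_zero_iff_norm.1 hx)⟩

/-- **The normalized first eigenfunction of the unit ball.**
The function `u(x) = j‖x‖^{1-N/2} J_{N/2-1}(j‖x‖)/(Nω_N ∫₀^j r J²_{N/2-1}(r) dr)^{1/2}`,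
extended by continuity at the origin, is `C^∞` on the closed unit ball, positive inside,
vanishes on the boundary, satisfies `-Δu = j²u` with unit `L²` norm, and the modulus of its
gradient is constant on `∂B`, equal to `|G_N|`. -/
theorem unit_ball_first_eigenfunction (N : ℕ) (hN : 2 ≤ N) :
    ∃ U : euc N → ℝ,
      ContDiffOn ℝ (⊤ : ℕ∞) U (closedBall (0 : euc N) 1) ∧
      (∀ x : euc N, x ≠ 0 → ‖x‖ ≤ 1 →
        U x = besselJzero ((N : ℝ) / 2 - 1) * ‖x‖ ^ ((1 : ℝ) - N / 2) *
            besselJ ((N : ℝ) / 2 - 1) (besselJzero ((N : ℝ) / 2 - 1) * ‖x‖) /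
          Real.sqrt (N * ballVol N *
            ∫ r in (0 : ℝ)..(besselJzero ((N : ℝ) / 2 - 1)),
              r * besselJ ((N : ℝ) / 2 - 1) r ^ 2)) ∧
      (∀ x ∈ ball (0 : euc N) 1, 0 < U x) ∧
      (∀ x ∈ sphere (0 : euc N) 1, U x = 0) ∧
      (∀ x ∈ ball (0 : euc N) 1, -lap N U x = besselJzero ((N : ℝ) / 2 - 1) ^ 2 * U x) ∧
      (∫ x in ball (0 : euc N) 1, U x ^ 2 = 1) ∧
      (∀ x ∈ sphere (0 : euc N) 1, ‖gradient U x‖ = |GN N|) := by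
  obtain ⟨U, hsmooth, hformula, hpos, hzero, hlap, hnorm, hgrad⟩ :=
    unit_ball_first_eigenfunction_general N (by omega)
  exact ⟨U, hsmooth.contDiffOn, fun x hx _ => hformula x hx, hpos, hzero, fun x _ => hlap x,
    hnorm, hgrad⟩
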